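/- Let G be a finite group such that every nontrivial complex irreducible representation of G has dimension at least D. Then for all functions f₁, f₂, f₃ : G → 𝔻 one has (1/|G|) Σ_{g∈G} | (1/|G|) Σ_{x∈G} f₁(x) f₂(gx) f₃(xg) − ((1/|G|) Σ_{x∈G} f₁(x)) · ((1/|G|) Σ_{x∈G} Ef₂(x) · Ef₃(x)) | ≤ 4 · D^{-1/8}, where for f : G → ℂ, Ef(x) denotes the average of f over the conjugacy class of x in G. -/

import Mathlib

/-- A finite group `G` is `D`-quasi-random if every nontrivial complex irreducible
representation of `G` has dimension at least `D`. -/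
def IsQuasiRandomFin (G : Type*) [Group G] (D : ℕ) : Prop :=
  ∀ (V : Type) [AddCommGroup V] [Module ℂ V] [FiniteDimensional ℂ V]
    (ρ : Representation ℂ G V),
    IsSimpleModule (MonoidAlgebra ℂ G) ρ.asModule →
    (∃ (g : G) (v : V), ρ g v ≠ v) →
    D ≤ Module.finrank ℂ V

/-- `classAvg f x` is the average of `f` over the conjugacy class of `x` in `G`; this is the
conditional expectation of `f` onto the algebra of conjugation-invariant functions with
respect to the uniform probability measure on `G`. -/
noncomputable def classAvg {G : Type*} [Group G] [Fintype G] (f : G → ℂ) (x : G) : ℂ :=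
  letI := Classical.decPred fun y : G => IsConj x y
  ((Finset.univ.filter fun y : G => IsConj x y).card : ℂ)⁻¹ *
    ∑ y ∈ Finset.univ.filter fun y : G => IsConj x y, f y

/-!
A unitary representation of a `D`-quasi-random group mixes: if `v` is orthogonal to the fixed
vectors, then the frame operator `∑ g, ⟪ρ g v, ·⟫ ρ g v` commutes with the representation, so each
of its eigenspaces with nonzero eigenvalue has dimension at least `D`. Its trace is `|G| ‖v‖²`,
whence its eigenvalues are at most `|G| ‖v‖² / D` and `𝔼 g, |⟪ρ g v, u⟫|² ≤ ‖v‖² ‖u‖² / D`.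
For the conjugation action this settles the case of constant `f₁`.

If `f₁` has mean zero, Cauchy–Schwarz eliminates `f₃` and leaves correlations of
`P k x = f₁ x · conj (f₁ (x k⁻¹))` with left translates of a bounded function. Mixing for left
translation replaces these by the mean of `P k`, which is small for most `k` by mixing again.
-/

open Module InnerProductSpace
open scoped BigOperators ComplexConjugate

lemma rpow_neg_quarter_sq {x : ℝ} (hx : 0 ≤ x) : (x ^ (-(1 / 4) : ℝ)) ^ 2 = (√x)⁻¹ := by
  rw [Real.sqrt_eq_rpow, ← Real.rpow_neg hx, ← Real.rpow_mul_natCast hx]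
  norm_num

section Expect

variable {ι κ 𝕜 : Type*} [Fintype ι] [Fintype κ] [RCLike 𝕜]

lemma expect_le_sqrt_expect_sq (f : ι → ℝ) : 𝔼 i, f i ≤ √(𝔼 i, f i ^ 2) := by
  cases isEmpty_or_nonempty ι
  · simp
  · refine Real.le_sqrt_of_sq_le ?_
    simpa using Finset.expect_mul_sq_le_sq_mul_sq Finset.univ f 1

lemma expect_norm_sub_sq [Nonempty ι] (f : ι → 𝕜) (c : 𝕜) :
    𝔼 i, ‖f i - c‖ ^ 2 = 𝔼 i, ‖f i - 𝔼 j, f j‖ ^ 2 + ‖𝔼 i, f i - c‖ ^ 2 := by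
  rw [← RCLike.ofReal_inj (K := 𝕜)]
  simp only [RCLike.ofReal_add, RCLike.ofReal_pow, ← RCLike.mul_conj,
    map_sub, mul_sub, sub_mul, Finset.expect_sub_distrib, ← Finset.expect_mul,
    ← Finset.mul_expect, map_expect, Fintype.expect_const]
  ring

lemma expect_norm_sub_expect_sq_le (f : ι → 𝕜) (c : 𝕜) :
    𝔼 i, ‖f i - 𝔼 j, f j‖ ^ 2 ≤ 𝔼 i, ‖f i - c‖ ^ 2 := by
  cases isEmpty_or_nonempty ι
  · simp
  · rw [expect_norm_sub_sq f c]
    exact le_add_of_nonneg_right (sq_nonneg _)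

lemma norm_expect_sq_le (f : ι → 𝕜) : ‖𝔼 i, f i‖ ^ 2 ≤ 𝔼 i, ‖f i‖ ^ 2 := by
  cases isEmpty_or_nonempty ι
  · simp
  · have h := expect_norm_sub_sq f 0
    simp only [sub_zero] at h
    rw [h]
    exact le_add_of_nonneg_left (by positivity)

lemma expect_norm_sq_le_one {f : ι → 𝕜} (hf : ∀ i, ‖f i‖ ≤ 1) : 𝔼 i, ‖f i‖ ^ 2 ≤ 1 := by
  cases isEmpty_or_nonempty ι
  · simp
  · exact Finset.expect_le Finset.univ_nonempty fun i _ => pow_le_one₀ (norm_nonneg _) (hf i)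

lemma expect_norm_expect_sq_le_expect_norm_correlation (w : ι → κ → 𝕜) :
    𝔼 y, ‖𝔼 i, w i y‖ ^ 2 ≤ 𝔼 i, 𝔼 j, ‖𝔼 y, w i y * conj (w j y)‖ := by
  have expand : ((𝔼 y, ‖𝔼 i, w i y‖ ^ 2 : ℝ) : 𝕜) = 𝔼 i, 𝔼 j, 𝔼 y, w i y * conj (w j y) := by
    simp only [RCLike.ofReal_pow, ← RCLike.mul_conj, map_expect, Finset.expect_mul_expect]
    rw [Finset.expect_comm]
    exact Finset.expect_congr rfl fun i _ => Finset.expect_comm _ _ _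
  calc 𝔼 y, ‖𝔼 i, w i y‖ ^ 2 = ‖((𝔼 y, ‖𝔼 i, w i y‖ ^ 2 : ℝ) : 𝕜)‖ := by
        rw [RCLike.norm_of_nonneg (by positivity)]
    _ ≤ 𝔼 i, ‖𝔼 j, 𝔼 y, w i y * conj (w j y)‖ := by
        rw [expand]
        exact RCLike.norm_expect_le (K := 𝕜)
    _ ≤ 𝔼 i, 𝔼 j, ‖𝔼 y, w i y * conj (w j y)‖ :=
        Finset.expect_le_expect fun i _ => RCLike.norm_expect_le (K := 𝕜)

lemma sq_expect_norm_expect_mul_le (v : ι → κ → 𝕜) (f : κ → 𝕜) :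
    (𝔼 i, ‖𝔼 y, v i y * f y‖) ^ 2
      ≤ (𝔼 i, 𝔼 j, ‖𝔼 y, v i y * conj (v j y)‖) * 𝔼 y, ‖f y‖ ^ 2 := by
  choose c norm_c norm_eq using fun i => RCLike.exists_norm_eq_mul_self (𝔼 y, v i y * f y)
  have le_swapped : 𝔼 i, ‖𝔼 y, v i y * f y‖ ≤ 𝔼 y, ‖𝔼 i, c i * v i y‖ * ‖f y‖ := by
    have swap : ((𝔼 i, ‖𝔼 y, v i y * f y‖ : ℝ) : 𝕜) = 𝔼 y, (𝔼 i, c i * v i y) * f y := by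
      simp only [RCLike.ofReal_expect, norm_eq, Finset.mul_expect, Finset.expect_mul, mul_assoc]
      exact Finset.expect_comm _ _ _
    rw [← RCLike.norm_of_nonneg (K := 𝕜) (by positivity : 0 ≤ 𝔼 i, ‖𝔼 y, v i y * f y‖), swap]
    simp only [← norm_mul]
    exact RCLike.norm_expect_le (K := 𝕜)
  have norm_correlation (i j) :
      ‖𝔼 y, c i * v i y * conj (c j * v j y)‖ = ‖𝔼 y, v i y * conj (v j y)‖ := by
    have factor : 𝔼 y, c i * v i y * conj (c j * v j y)
        = c i * conj (c j) * 𝔼 y, v i y * conj (v j y) := by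
      rw [Finset.mul_expect]
      exact Finset.expect_congr rfl fun y _ => by rw [map_mul, mul_mul_mul_comm]
    rw [factor, norm_mul, norm_mul, RCLike.norm_conj, norm_c, norm_c, one_mul, one_mul]
  calc (𝔼 i, ‖𝔼 y, v i y * f y‖) ^ 2
      ≤ (𝔼 y, ‖𝔼 i, c i * v i y‖ * ‖f y‖) ^ 2 := by gcongr
    _ ≤ (𝔼 y, ‖𝔼 i, c i * v i y‖ ^ 2) * 𝔼 y, ‖f y‖ ^ 2 :=
        Finset.expect_mul_sq_le_sq_mul_sq _ _ _
    _ ≤ (𝔼 i, 𝔼 j, ‖𝔼 y, c i * v i y * conj (c j * v j y)‖) * 𝔼 y, ‖f y‖ ^ 2 := by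
        gcongr
        exact expect_norm_expect_sq_le_expect_norm_correlation _
    _ = (𝔼 i, 𝔼 j, ‖𝔼 y, v i y * conj (v j y)‖) * 𝔼 y, ‖f y‖ ^ 2 := by
        simp only [norm_correlation]

end Expect

section FrameOperator

variable {ι 𝕜 E : Type*} [Fintype ι] [RCLike 𝕜] [NormedAddCommGroup E] [InnerProductSpace 𝕜 E]

variable (𝕜) in
/-- The frame operator `x ↦ ∑ i, ⟪w i, x⟫ • w i` of a finite family of vectors; its quadratic form
is `∑ i, ‖⟪w i, x⟫‖ ^ 2`. -/
noncomputable def frameOperator (w : ι → E) : E →ₗ[𝕜] E :=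
  ∑ i, (rankOne 𝕜 (w i) (w i) : E →ₗ[𝕜] E)

lemma frameOperator_apply (w : ι → E) (x : E) :
    frameOperator 𝕜 w x = ∑ i, ⟪w i, x⟫_𝕜 • w i := by
  simp [frameOperator]

lemma isSymmetric_frameOperator (w : ι → E) : (frameOperator 𝕜 w).IsSymmetric :=
  LinearMap.isSymmetric_sum Finset.univ fun i _ => isSymmetric_rankOne_self (w i)

lemma inner_frameOperator_self (w : ι → E) (x : E) :
    ⟪frameOperator 𝕜 w x, x⟫_𝕜 = (∑ i, ‖⟪w i, x⟫_𝕜‖ ^ 2 : ℝ) := by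
  simp only [frameOperator_apply, sum_inner, inner_smul_left, RCLike.conj_mul]
  push_cast
  rfl

variable [FiniteDimensional 𝕜 E]

lemma re_inner_map_self_le_of_eigenvalue_le {T : E →ₗ[𝕜] E} (hT : T.IsSymmetric) {c : ℝ}
    (hc : ∀ μ : ℝ, End.HasEigenvalue T (μ : 𝕜) → μ ≤ c) (x : E) :
    RCLike.re ⟪T x, x⟫_𝕜 ≤ c * ‖x‖ ^ 2 := by
  let e := hT.eigenvectorBasis rfl
  have diagonalize : ⟪T x, x⟫_𝕜 = (∑ i, hT.eigenvalues rfl i * ‖⟪e i, x⟫_𝕜‖ ^ 2 : ℝ) := by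
    rw [← e.sum_inner_mul_inner]
    push_cast
    refine Finset.sum_congr rfl fun i _ => ?_
    rw [hT, hT.apply_eigenvectorBasis rfl i, inner_smul_right, mul_assoc, ← inner_conj_symm x,
      RCLike.conj_mul]
  rw [diagonalize, RCLike.ofReal_re, ← e.sum_sq_norm_inner_right, Finset.mul_sum]
  gcongr with i
  exact hc _ (hT.hasEigenvalue_eigenvalues rfl i)

lemma sum_norm_inner_sq_le_of_eigenvalue_le (w : ι → E) {c : ℝ}
    (hc : ∀ μ : ℝ, End.HasEigenvalue (frameOperator 𝕜 w) (μ : 𝕜) → μ ≤ c) (x : E) :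
    ∑ i, ‖⟪w i, x⟫_𝕜‖ ^ 2 ≤ c * ‖x‖ ^ 2 := by
  simpa only [inner_frameOperator_self, RCLike.ofReal_re] using
    re_inner_map_self_le_of_eigenvalue_le (isSymmetric_frameOperator w) hc x

lemma finrank_eigenspace_frameOperator_mul_le (w : ι → E) (μ : ℝ) :
    finrank 𝕜 (End.eigenspace (frameOperator 𝕜 w) (μ : 𝕜)) * μ ≤ ∑ i, ‖w i‖ ^ 2 := by
  let b := stdOrthonormalBasis 𝕜 (End.eigenspace (frameOperator 𝕜 w) (μ : 𝕜))
  have energy_eq (k) : ∑ i, ‖⟪w i, (b k : E)⟫_𝕜‖ ^ 2 = μ := by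
    have norm_b : ‖(b k : E)‖ = 1 := b.orthonormal.1 k
    have h := inner_frameOperator_self (𝕜 := 𝕜) w (b k)
    rw [End.mem_eigenspace_iff.1 (b k).2, inner_smul_left, inner_self_eq_norm_sq_to_K, norm_b] at h
    simpa using (congrArg RCLike.re h).symm
  have bessel (i) : ∑ k, ‖⟪w i, (b k : E)⟫_𝕜‖ ^ 2 ≤ ‖w i‖ ^ 2 := by
    have ho : Orthonormal 𝕜 fun k => (b k : E) :=
      b.orthonormal.comp_linearIsometry (Submodule.subtypeₗᵢ _)
    simpa only [norm_inner_symm] using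
      ho.sum_inner_products_le (x := w i) (s := Finset.univ)
  calc finrank 𝕜 (End.eigenspace (frameOperator 𝕜 w) (μ : 𝕜)) * μ
      = ∑ k, ∑ i, ‖⟪w i, (b k : E)⟫_𝕜‖ ^ 2 := by simp [energy_eq]
    _ = ∑ i, ∑ k, ‖⟪w i, (b k : E)⟫_𝕜‖ ^ 2 := Finset.sum_comm
    _ ≤ ∑ i, ‖w i‖ ^ 2 := Finset.sum_le_sum fun i _ => bessel i

end FrameOperator

section Orbit

variable {G 𝕜 E : Type*} [Group G] [Fintype G] [RCLike 𝕜] [NormedAddCommGroup E]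
  [InnerProductSpace 𝕜 E] (ρ : Representation 𝕜 G E) (hρ : ∀ g x y, ⟪ρ g x, ρ g y⟫_𝕜 = ⟪x, y⟫_𝕜)
include hρ

lemma commute_frameOperator_orbit (v : E) (h : G) :
    Commute (frameOperator 𝕜 fun g => ρ g v) (ρ h) := by
  ext x
  simp only [End.mul_apply, frameOperator_apply, map_sum, map_smul]
  refine (Fintype.sum_equiv (Equiv.mulLeft h) _ _ fun g => ?_).symm
  rw [Equiv.coe_mulLeft, map_mul, End.mul_apply, hρ]

lemma frameOperator_orbit_eq_zero {v w : E} (hv : v ∈ ρ.invariantsᗮ) (hw : w ∈ ρ.invariants) :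
    frameOperator 𝕜 (fun g => ρ g v) w = 0 := by
  rw [frameOperator_apply]
  refine Finset.sum_eq_zero fun g _ => ?_
  rw [← hw g, hρ, Submodule.inner_left_of_mem_orthogonal hw hv, zero_smul]

end Orbit

section PermutationRepresentation

variable {G X 𝕜 : Type*} [Group G] [Fintype X] [RCLike 𝕜]

/-- The unitary representation of `G` on the functions on `X` attached to a permutation action `σ`,
with `g` sending `v` to `v ∘ σ g⁻¹`. -/
noncomputable def permRepresentation (σ : G →* Equiv.Perm X) :
    Representation 𝕜 G (EuclideanSpace 𝕜 X) where
  toFun g := (LinearIsometryEquiv.piLpCongrLeft 2 𝕜 𝕜 (σ g)).toLinearEquiv.toLinearMap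
  map_one' := by ext; simp [Equiv.Perm.one_def]
  map_mul' g h := by ext; simp [Equiv.Perm.mul_def]

lemma inner_permRepresentation_apply (σ : G →* Equiv.Perm X) (g : G) (v w : EuclideanSpace 𝕜 X) :
    ⟪permRepresentation σ g v, permRepresentation σ g w⟫_𝕜 = ⟪v, w⟫_𝕜 :=
  (LinearIsometryEquiv.piLpCongrLeft 2 𝕜 𝕜 (σ g)).inner_map_map v w

lemma inner_permRepresentation_left (σ : G →* Equiv.Perm X) (g : G) (v u : EuclideanSpace 𝕜 X) :
    ⟪permRepresentation σ g v, u⟫_𝕜 = ∑ x, u (σ g x) * conj (v x) := by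
  rw [PiLp.inner_apply]
  refine (Fintype.sum_equiv (σ g) _ _ fun x => ?_).symm
  simp [permRepresentation]

end PermutationRepresentation

section ClassAverage

variable {G : Type*} [Group G] [Fintype G]

lemma expect_comp_conj_eq_of_isConj {M : Type*} [AddCommMonoid M] [Module ℚ≥0 M] (f : G → M)
    {x y : G} (h : IsConj x y) :
    𝔼 g, f (g * x * g⁻¹) = 𝔼 g, f (g * y * g⁻¹) := by
  obtain ⟨c, rfl⟩ := isConj_iff.1 h
  refine (Fintype.expect_equiv (Equiv.mulRight c) _ _ fun g => ?_).symm
  simp only [Equiv.coe_mulRight, mul_inv_rev, mul_assoc]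

lemma classAvg_eq_expect_conj (f : G → ℂ) (x : G) : classAvg f x = 𝔼 g, f (g * x * g⁻¹) := by
  classical
  set C : Finset G := {y | IsConj x y} with hC
  have classAvg_eq : classAvg f x = 𝔼 y ∈ C, f y := by
    rw [Finset.expect_eq_sum_div_card, div_eq_inv_mul, classAvg]
    congr!
  have conj_invariant (g : G) : 𝔼 y ∈ C, f (g * y * g⁻¹) = 𝔼 y ∈ C, f y := by
    refine Finset.expect_equiv (MulAut.conj g).toEquiv (fun y => ?_) fun _ _ => rfl
    simp only [hC, Finset.mem_filter_univ]
    exact ⟨fun h => h.trans (isConj_iff.2 ⟨g, rfl⟩), fun h => h.trans (isConj_iff.2 ⟨g, rfl⟩).symm⟩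
  calc classAvg f x = 𝔼 g : G, 𝔼 y ∈ C, f (g * y * g⁻¹) := by
        simp only [classAvg_eq, conj_invariant, Fintype.expect_const]
    _ = 𝔼 y ∈ C, 𝔼 g, f (g * y * g⁻¹) := Finset.expect_comm _ _ _
    _ = 𝔼 y ∈ C, 𝔼 g, f (g * x * g⁻¹) := Finset.expect_congr rfl fun y hy =>
        (expect_comp_conj_eq_of_isConj f (Finset.mem_filter_univ y |>.1 hy)).symm
    _ = 𝔼 g, f (g * x * g⁻¹) := Finset.expect_const ⟨x, Finset.mem_filter_univ x |>.2 (.refl x)⟩ _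

lemma expect_expect_comp_conj_mul (f₁ f₂ : G → ℂ) :
    𝔼 g, 𝔼 x, f₁ (g * x * g⁻¹) * f₂ x = 𝔼 x, classAvg f₁ x * classAvg f₂ x := by
  have classAvg_conj (g x : G) : classAvg f₁ (g * x * g⁻¹) = classAvg f₁ x := by
    simp only [classAvg_eq_expect_conj]
    exact (expect_comp_conj_eq_of_isConj f₁ (isConj_iff.2 ⟨g, rfl⟩)).symm
  have conj_substitution (g : G) :
      𝔼 x, classAvg f₁ x * f₂ x = 𝔼 x, classAvg f₁ x * f₂ (g * x * g⁻¹) := by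
    refine (Fintype.expect_equiv (MulAut.conj g).toEquiv _ _ fun x => ?_).symm
    exact congrArg (· * f₂ (g * x * g⁻¹)) (classAvg_conj g x).symm
  calc 𝔼 g, 𝔼 x, f₁ (g * x * g⁻¹) * f₂ x
      = 𝔼 x, classAvg f₁ x * f₂ x := by
        rw [Finset.expect_comm]
        simp only [classAvg_eq_expect_conj, Finset.expect_mul]
    _ = 𝔼 g : G, 𝔼 x, classAvg f₁ x * f₂ (g * x * g⁻¹) := by
        simp only [← conj_substitution, Fintype.expect_const]
    _ = 𝔼 x, classAvg f₁ x * classAvg f₂ x := by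
        rw [Finset.expect_comm]
        simp only [classAvg_eq_expect_conj f₂, Finset.mul_expect]

end ClassAverage

section Substitution

variable {G 𝕜 : Type*} [Group G] [Fintype G] [RCLike 𝕜]

lemma expect_expect_norm_correlation_eq (F f : G → 𝕜) :
    𝔼 g, 𝔼 h, ‖𝔼 y, F (y * g⁻¹) * f (g * (y * g⁻¹)) * conj (F (y * h⁻¹) * f (h * (y * h⁻¹)))‖
      = 𝔼 k, 𝔼 g, ‖𝔼 x, f (g * x) * conj (f (k * (g * x) * k⁻¹))
          * (F x * conj (F (x * k⁻¹)))‖ := by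
  conv_rhs => rw [Finset.expect_comm]
  refine Finset.expect_congr rfl fun g _ => ?_
  refine (Fintype.expect_equiv (Equiv.mulRight g) _ _ fun k => congrArg norm ?_).symm
  refine Fintype.expect_equiv (Equiv.mulRight g) _ _ fun x => ?_
  simp only [Equiv.coe_mulRight, mul_inv_rev, mul_inv_cancel_left, mul_inv_cancel, mul_one,
    map_mul, mul_assoc]
  ring

end Substitution

namespace IsQuasiRandomFin

variable {G : Type*} [Group G] {D : ℕ}

lemma le_finrank_of_isIrreducible (hQR : IsQuasiRandomFin G D)
    {V : Type*} [AddCommGroup V] [Module ℂ V] [FiniteDimensional ℂ V]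
    (ρ : Representation ℂ G V) [ρ.IsIrreducible] (hρ : ∃ g v, ρ g v ≠ v) :
    D ≤ finrank ℂ V := by
  let e : V ≃ₗ[ℂ] (Fin (finrank ℂ V) → ℂ) := (finBasis ℂ V).equivFun
  let ρ' : Representation ℂ G (Fin (finrank ℂ V) → ℂ) :=
    (e.conjRingEquiv : End ℂ V →* End ℂ (Fin (finrank ℂ V) → ℂ)).comp ρ
  let eAsModule : ρ.asModule ≃ₗ[MonoidAlgebra ℂ G] ρ'.asModule :=
    .ofBijective
      (Representation.IntertwiningMap.equivLinearMapAsModule ρ ρ' ⟨e, fun g => by ext; simp [ρ']⟩)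
      e.bijective
  obtain ⟨g, v, hv⟩ := hρ
  simpa using hQR _ ρ' (.congr eAsModule.symm) ⟨g, e v, by simpa [ρ'] using hv⟩

lemma le_finrank_of_invariants_eq_bot (hQR : IsQuasiRandomFin G D)
    {V : Type*} [AddCommGroup V] [Module ℂ V] [FiniteDimensional ℂ V] [Nontrivial V]
    (ρ : Representation ℂ G V) (hρ : ρ.invariants = ⊥) :
    D ≤ finrank ℂ V := by
  by_cases h : ∃ σ : Subrepresentation ρ, σ.toSubmodule ≠ ⊥ ∧ σ.toSubmodule ≠ ⊤
  · obtain ⟨σ, hbot, htop⟩ := h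
    have hlt : finrank ℂ σ.toSubmodule < finrank ℂ V := Submodule.finrank_lt htop
    have : Nontrivial σ.toSubmodule := Submodule.nontrivial_iff_ne_bot.2 hbot
    have hσ : σ.toRepresentation.invariants = ⊥ := by
      refine (Submodule.eq_bot_iff _).2 fun v hv => Subtype.ext ?_
      exact (Submodule.eq_bot_iff _).1 hρ v fun g => congrArg Subtype.val (hv g)
    exact (le_finrank_of_invariants_eq_bot hQR σ.toRepresentation hσ).trans hlt.le
  · push Not at h
    obtain ⟨v, hv⟩ := exists_ne (0 : V)
    have : ρ.IsIrreducible :=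
      { exists_pair_ne := ⟨⊥, ⊤, fun hbt => bot_ne_top (congrArg Subrepresentation.toSubmodule hbt)⟩
        eq_bot_or_eq_top := fun σ => (em _).imp (Subrepresentation.toSubmodule_injective ·)
          fun hσ => Subrepresentation.toSubmodule_injective (h σ hσ) }
    refine hQR.le_finrank_of_isIrreducible ρ ?_
    by_contra! hfix
    exact hv ((Submodule.eq_bot_iff _).1 hρ v fun g => hfix g v)
termination_by finrank ℂ V

section Mixing

variable [Fintype G]

section UnitaryRepresentation

variable {E : Type*} [NormedAddCommGroup E] [InnerProductSpace ℂ E] [FiniteDimensional ℂ E]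
  {ρ : Representation ℂ G E}

lemma eigenvalue_frameOperator_orbit_le (hQR : IsQuasiRandomFin G D)
    (hρ : ∀ g x y, ⟪ρ g x, ρ g y⟫_ℂ = ⟪x, y⟫_ℂ) {v : E} (hv : v ∈ ρ.invariantsᗮ) {μ : ℝ}
    (hμ : End.HasEigenvalue (frameOperator ℂ fun g => ρ g v) (μ : ℂ)) :
    D * μ ≤ Fintype.card G * ‖v‖ ^ 2 := by
  rcases le_or_gt μ 0 with hμ₀ | hμ₀
  · exact (mul_nonpos_of_nonneg_of_nonpos (by positivity) hμ₀).trans (by positivity)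
  let W : Subrepresentation ρ :=
    { toSubmodule := End.eigenspace (frameOperator ℂ fun g => ρ g v) (μ : ℂ)
      apply_mem_toSubmodule := fun h =>
        End.mapsTo_genEigenspace_of_comm (commute_frameOperator_orbit ρ hρ v h) _ 1 }
  have : Nontrivial W.toSubmodule := Submodule.nontrivial_iff_ne_bot.2 hμ
  have invariants_eq_bot : W.toRepresentation.invariants = ⊥ := by
    refine (Submodule.eq_bot_iff _).2 fun w hw => Subtype.ext ?_
    have smul_eq_zero : (μ : ℂ) • (w : E) = 0 := by
      rw [← End.mem_eigenspace_iff.1 w.2]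
      exact frameOperator_orbit_eq_zero ρ hρ hv fun g => congrArg Subtype.val (hw g)
    exact (smul_eq_zero_iff_right (by exact_mod_cast hμ₀.ne')).1 smul_eq_zero
  have norm_apply (g : G) : ‖ρ g v‖ = ‖v‖ := by
    rw [norm_eq_sqrt_re_inner (𝕜 := ℂ), hρ, ← norm_eq_sqrt_re_inner]
  calc D * μ ≤ finrank ℂ W.toSubmodule * μ := by
        gcongr
        exact hQR.le_finrank_of_invariants_eq_bot _ invariants_eq_bot
    _ ≤ ∑ g, ‖ρ g v‖ ^ 2 := finrank_eigenspace_frameOperator_mul_le _ _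
    _ = Fintype.card G * ‖v‖ ^ 2 := by simp [norm_apply]

lemma expect_norm_inner_orbit_sq_le (hQR : IsQuasiRandomFin G D) (hD : 0 < D)
    (hρ : ∀ g x y, ⟪ρ g x, ρ g y⟫_ℂ = ⟪x, y⟫_ℂ) {v : E} (hv : v ∈ ρ.invariantsᗮ) (u : E) :
    𝔼 g, ‖⟪ρ g v, u⟫_ℂ‖ ^ 2 ≤ ‖v‖ ^ 2 * ‖u‖ ^ 2 / D := by
  have eigenvalue_le (μ : ℝ) (hμ : End.HasEigenvalue (frameOperator ℂ fun g => ρ g v) (μ : ℂ)) :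
      μ ≤ Fintype.card G * ‖v‖ ^ 2 / D := by
    rw [le_div_iff₀' (by positivity)]
    exact hQR.eigenvalue_frameOperator_orbit_le hρ hv hμ
  rw [Fintype.expect_eq_sum_div_card, div_le_iff₀ (by positivity)]
  exact (sum_norm_inner_sq_le_of_eigenvalue_le _ eigenvalue_le u).trans_eq (by ring)

lemma expect_norm_inner_orbit_sub_expect_sq_le (hQR : IsQuasiRandomFin G D) (hD : 0 < D)
    (hρ : ∀ g x y, ⟪ρ g x, ρ g y⟫_ℂ = ⟪x, y⟫_ℂ) (v u : E) :
    𝔼 g, ‖⟪ρ g v, u⟫_ℂ - 𝔼 h, ⟪ρ h v, u⟫_ℂ‖ ^ 2 ≤ ‖v‖ ^ 2 * ‖u‖ ^ 2 / D := by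
  set p := ρ.invariants.starProjection v
  have fixed (g : G) : ρ g p = p := ρ.invariants.starProjection_apply_mem v g
  have norm_sub_le : ‖v - p‖ ≤ ‖v‖ := by
    rw [← Submodule.starProjection_orthogonal_val]
    exact Submodule.norm_starProjection_apply_le _ _
  calc 𝔼 g, ‖⟪ρ g v, u⟫_ℂ - 𝔼 h, ⟪ρ h v, u⟫_ℂ‖ ^ 2
      ≤ 𝔼 g, ‖⟪ρ g v, u⟫_ℂ - ⟪p, u⟫_ℂ‖ ^ 2 := expect_norm_sub_expect_sq_le _ _
    _ = 𝔼 g, ‖⟪ρ g (v - p), u⟫_ℂ‖ ^ 2 := by simp only [map_sub, fixed, inner_sub_left]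
    _ ≤ ‖v - p‖ ^ 2 * ‖u‖ ^ 2 / D :=
        hQR.expect_norm_inner_orbit_sq_le hD hρ (Submodule.sub_starProjection_mem_orthogonal v) u
    _ ≤ ‖v‖ ^ 2 * ‖u‖ ^ 2 / D := by gcongr

end UnitaryRepresentation

lemma expect_norm_expect_perm_sub_expect_sq_le {X : Type*} [Fintype X] (hQR : IsQuasiRandomFin G D)
    (hD : 0 < D) (σ : G →* Equiv.Perm X) (u v : X → ℂ) :
    𝔼 g, ‖𝔼 x, u (σ g x) * v x - 𝔼 h, 𝔼 x, u (σ h x) * v x‖ ^ 2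
      ≤ (𝔼 x, ‖u x‖ ^ 2) * (𝔼 x, ‖v x‖ ^ 2) / D := by
  set U : EuclideanSpace ℂ X := WithLp.toLp 2 u
  set V : EuclideanSpace ℂ X := WithLp.toLp 2 fun x => conj (v x)
  have correlation_eq (g : G) :
      𝔼 x, u (σ g x) * v x = ⟪permRepresentation σ g V, U⟫_ℂ / Fintype.card X := by
    simp [Fintype.expect_eq_sum_div_card, inner_permRepresentation_left, U, V]
  calc 𝔼 g, ‖𝔼 x, u (σ g x) * v x - 𝔼 h, 𝔼 x, u (σ h x) * v x‖ ^ 2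
      = (𝔼 g, ‖⟪permRepresentation σ g V, U⟫_ℂ - 𝔼 h, ⟪permRepresentation σ h V, U⟫_ℂ‖ ^ 2)
          / Fintype.card X ^ 2 := by
        simp only [correlation_eq, ← Finset.expect_div, ← sub_div, norm_div, Complex.norm_natCast,
          div_pow]
    _ ≤ ‖V‖ ^ 2 * ‖U‖ ^ 2 / D / Fintype.card X ^ 2 := by
        gcongr
        exact hQR.expect_norm_inner_orbit_sub_expect_sq_le hD (inner_permRepresentation_apply σ) V U
    _ = (𝔼 x, ‖u x‖ ^ 2) * (𝔼 x, ‖v x‖ ^ 2) / D := by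
        simp only [EuclideanSpace.norm_sq_eq, Fintype.expect_eq_sum_div_card, U, V,
          RCLike.norm_conj]
        ring

lemma expect_norm_expect_mul_left_sub_sq_le (hQR : IsQuasiRandomFin G D) (hD : 0 < D)
    (u v : G → ℂ) :
    𝔼 g, ‖𝔼 x, u (g * x) * v x - (𝔼 x, u x) * 𝔼 x, v x‖ ^ 2
      ≤ (𝔼 x, ‖u x‖ ^ 2) * (𝔼 x, ‖v x‖ ^ 2) / D := by
  have expect_eq : 𝔼 h, 𝔼 x, u (h * x) * v x = (𝔼 x, u x) * 𝔼 x, v x := by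
    rw [Finset.expect_comm, Finset.mul_expect]
    refine Finset.expect_congr rfl fun x _ => ?_
    rw [← Finset.expect_mul]
    exact congrArg (· * v x) (Fintype.expect_equiv (Equiv.mulRight x) _ _ fun _ => rfl)
  rw [← expect_eq]
  exact hQR.expect_norm_expect_perm_sub_expect_sq_le hD (MulAction.toPermHom G G) u v

lemma expect_norm_expect_mul_left_right_sub_sq_le (hQR : IsQuasiRandomFin G D) (hD : 0 < D)
    (u v : G → ℂ) :
    𝔼 g, ‖𝔼 x, u (g * x) * v (x * g) - 𝔼 x, classAvg u x * classAvg v x‖ ^ 2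
      ≤ (𝔼 x, ‖u x‖ ^ 2) * (𝔼 x, ‖v x‖ ^ 2) / D := by
  have translate (g : G) : 𝔼 x, u (g * x) * v (x * g) = 𝔼 x, u (g * x * g⁻¹) * v x :=
    Fintype.expect_equiv (Equiv.mulRight g) _ _ fun x => by simp [mul_assoc]
  simp only [translate]
  rw [← expect_expect_comp_conj_mul]
  exact hQR.expect_norm_expect_perm_sub_expect_sq_le hD ((MulAut.toPerm G).comp MulAut.conj) u v

lemma expect_norm_expect_mul_left_le (hQR : IsQuasiRandomFin G D) (hD : 0 < D) {u : G → ℂ}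
    (hu : ∀ x, ‖u x‖ ≤ 1) (v : G → ℂ) :
    𝔼 g, ‖𝔼 x, u (g * x) * v x‖ ≤ ‖𝔼 x, v x‖ + √((𝔼 x, ‖v x‖ ^ 2) / D) := by
  have norm_expect_le_one : ‖𝔼 x, u x‖ ≤ 1 :=
    (sq_le_one_iff₀ (norm_nonneg _)).1 ((norm_expect_sq_le u).trans (expect_norm_sq_le_one hu))
  calc 𝔼 g, ‖𝔼 x, u (g * x) * v x‖
      ≤ 𝔼 g, (‖𝔼 x, v x‖ + ‖𝔼 x, u (g * x) * v x - (𝔼 x, u x) * 𝔼 x, v x‖) := by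
        refine Finset.expect_le_expect fun g _ =>
          (norm_le_norm_add_norm_sub' _ ((𝔼 x, u x) * 𝔼 x, v x)).trans ?_
        gcongr
        rw [norm_mul]
        exact mul_le_of_le_one_left (norm_nonneg _) norm_expect_le_one
    _ = ‖𝔼 x, v x‖ + 𝔼 g, ‖𝔼 x, u (g * x) * v x - (𝔼 x, u x) * 𝔼 x, v x‖ := by
        rw [Finset.expect_add_distrib, Fintype.expect_const]
    _ ≤ ‖𝔼 x, v x‖ + √((𝔼 x, ‖u x‖ ^ 2) * (𝔼 x, ‖v x‖ ^ 2) / D) := by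
        gcongr
        exact (expect_le_sqrt_expect_sq _).trans
          (Real.sqrt_le_sqrt (hQR.expect_norm_expect_mul_left_sub_sq_le hD u v))
    _ ≤ ‖𝔼 x, v x‖ + √((𝔼 x, ‖v x‖ ^ 2) / D) := by
        gcongr
        exact mul_le_of_le_one_left (by positivity) (expect_norm_sq_le_one hu)

lemma expect_expect_norm_expect_mul_left_le (hQR : IsQuasiRandomFin G D) (hD : 0 < D)
    {ι : Type*} [Fintype ι] {u : ι → G → ℂ} (hu : ∀ i x, ‖u i x‖ ≤ 1) (v : ι → G → ℂ) :
    𝔼 i, 𝔼 g, ‖𝔼 x, u i (g * x) * v i x‖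
      ≤ 𝔼 i, ‖𝔼 x, v i x‖ + √((𝔼 i, 𝔼 x, ‖v i x‖ ^ 2) / D) := by
  calc 𝔼 i, 𝔼 g, ‖𝔼 x, u i (g * x) * v i x‖
      ≤ 𝔼 i, (‖𝔼 x, v i x‖ + √((𝔼 x, ‖v i x‖ ^ 2) / D)) :=
        Finset.expect_le_expect fun i _ => hQR.expect_norm_expect_mul_left_le hD (hu i) (v i)
    _ = 𝔼 i, ‖𝔼 x, v i x‖ + 𝔼 i, √((𝔼 x, ‖v i x‖ ^ 2) / D) := Finset.expect_add_distrib _ _ _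
    _ ≤ 𝔼 i, ‖𝔼 x, v i x‖ + √(𝔼 i, √((𝔼 x, ‖v i x‖ ^ 2) / D) ^ 2) := by
        gcongr
        exact expect_le_sqrt_expect_sq _
    _ = 𝔼 i, ‖𝔼 x, v i x‖ + √((𝔼 i, 𝔼 x, ‖v i x‖ ^ 2) / D) := by
        rw [Finset.expect_div]
        congr! 3 with i
        exact Real.sq_sqrt (by positivity)

lemma expect_norm_autocorrelation_le (hQR : IsQuasiRandomFin G D) (hD : 0 < D) {F : G → ℂ}
    (hF : 𝔼 x, F x = 0) :
    𝔼 k, ‖𝔼 x, F x * conj (F (x * k⁻¹))‖ ≤ (𝔼 x, ‖F x‖ ^ 2) / √D := by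
  have mixing := hQR.expect_norm_expect_mul_left_sub_sq_le hD
    (fun x => conj (F x⁻¹)) fun x => F x⁻¹
  have expect_comp_inv {R : Type} [AddCommMonoid R] [Module ℚ≥0 R] (f : G → R) :
      𝔼 x, f x⁻¹ = 𝔼 x, f x :=
    Fintype.expect_equiv (Equiv.inv G) _ _ fun _ => rfl
  have invert (k : G) : 𝔼 x, F x * conj (F (x * k⁻¹)) = 𝔼 x, conj (F (k * x)⁻¹) * F x⁻¹ :=
    Fintype.expect_equiv (Equiv.inv G) _ _ fun x => by simp [mul_comm]
  simp only [RCLike.norm_conj, expect_comp_inv F, expect_comp_inv (‖F ·‖ ^ 2), hF, mul_zero,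
    sub_zero, ← invert, ← sq] at mixing
  calc 𝔼 k, ‖𝔼 x, F x * conj (F (x * k⁻¹))‖
      ≤ √((𝔼 x, ‖F x‖ ^ 2) ^ 2 / D) :=
        (expect_le_sqrt_expect_sq _).trans (Real.sqrt_le_sqrt mixing)
    _ = (𝔼 x, ‖F x‖ ^ 2) / √D := by rw [Real.sqrt_div (by positivity), Real.sqrt_sq (by positivity)]

lemma expect_expect_norm_correlation_le (hQR : IsQuasiRandomFin G D) (hD : 0 < D) {F f : G → ℂ}
    (hF : 𝔼 x, F x = 0) (hf : ∀ x, ‖f x‖ ≤ 1) :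
    𝔼 k, 𝔼 g, ‖𝔼 x, f (g * x) * conj (f (k * (g * x) * k⁻¹)) * (F x * conj (F (x * k⁻¹)))‖
      ≤ 2 * (𝔼 x, ‖F x‖ ^ 2) / √D := by
  let P (k x : G) : ℂ := F x * conj (F (x * k⁻¹))
  let Q (k x : G) : ℂ := f x * conj (f (k * x * k⁻¹))
  have norm_Q_le (k x : G) : ‖Q k x‖ ≤ 1 := by
    rw [norm_mul, RCLike.norm_conj]
    exact mul_le_one₀ (hf _) (norm_nonneg _) (hf _)
  have expect_norm_P_sq : 𝔼 k, 𝔼 x, ‖P k x‖ ^ 2 = (𝔼 x, ‖F x‖ ^ 2) ^ 2 := by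
    rw [Finset.expect_comm, sq, Finset.expect_mul]
    refine Finset.expect_congr rfl fun x _ => ?_
    simp only [P, norm_mul, mul_pow, RCLike.norm_conj, ← Finset.mul_expect]
    exact congrArg _ (Fintype.expect_equiv (Equiv.divLeft x) _ _ fun k => by simp [div_eq_mul_inv])
  calc 𝔼 k, 𝔼 g, ‖𝔼 x, Q k (g * x) * P k x‖
      ≤ 𝔼 k, ‖𝔼 x, P k x‖ + √((𝔼 x, ‖F x‖ ^ 2) ^ 2 / D) := by
        rw [← expect_norm_P_sq]
        exact hQR.expect_expect_norm_expect_mul_left_le hD norm_Q_le P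
    _ ≤ (𝔼 x, ‖F x‖ ^ 2) / √D + (𝔼 x, ‖F x‖ ^ 2) / √D := by
        rw [Real.sqrt_div (by positivity), Real.sqrt_sq (by positivity)]
        gcongr
        exact hQR.expect_norm_autocorrelation_le hD hF
    _ = 2 * (𝔼 x, ‖F x‖ ^ 2) / √D := by ring

lemma sq_expect_norm_triple_correlation_le (hQR : IsQuasiRandomFin G D) (hD : 0 < D)
    {F f₂ : G → ℂ} (hF : 𝔼 x, F x = 0) (hf₂ : ∀ x, ‖f₂ x‖ ≤ 1) (f₃ : G → ℂ) :
    (𝔼 g, ‖𝔼 x, F x * f₂ (g * x) * f₃ (x * g)‖) ^ 2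
      ≤ 2 * (𝔼 x, ‖F x‖ ^ 2) / √D * 𝔼 x, ‖f₃ x‖ ^ 2 := by
  let v (g y : G) : ℂ := F (y * g⁻¹) * f₂ (g * (y * g⁻¹))
  have translate (g : G) : 𝔼 x, F x * f₂ (g * x) * f₃ (x * g) = 𝔼 y, v g y * f₃ y :=
    Fintype.expect_equiv (Equiv.mulRight g) _ _ fun x => by simp [v]
  calc (𝔼 g, ‖𝔼 x, F x * f₂ (g * x) * f₃ (x * g)‖) ^ 2
      = (𝔼 g, ‖𝔼 y, v g y * f₃ y‖) ^ 2 := by simp only [translate]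
    _ ≤ (𝔼 g, 𝔼 h, ‖𝔼 y, v g y * conj (v h y)‖) * 𝔼 x, ‖f₃ x‖ ^ 2 :=
        sq_expect_norm_expect_mul_le v f₃
    _ ≤ 2 * (𝔼 x, ‖F x‖ ^ 2) / √D * 𝔼 x, ‖f₃ x‖ ^ 2 := by
        gcongr
        rw [expect_expect_norm_correlation_eq]
        exact hQR.expect_expect_norm_correlation_le hD hF hf₂

lemma expect_norm_triple_correlation_le (hQR : IsQuasiRandomFin G D) (hD : 0 < D)
    {F f₂ : G → ℂ} (hF : 𝔼 x, F x = 0) (hf₂ : ∀ x, ‖f₂ x‖ ≤ 1) (f₃ : G → ℂ) :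
    𝔼 g, ‖𝔼 x, F x * f₂ (g * x) * f₃ (x * g)‖
      ≤ √2 * √(𝔼 x, ‖F x‖ ^ 2) * √(𝔼 x, ‖f₃ x‖ ^ 2) * (D : ℝ) ^ (-(1 / 4) : ℝ) := by
  rw [← sq_le_sq₀ (by positivity) (by positivity)]
  refine (hQR.sq_expect_norm_triple_correlation_le hD hF hf₂ f₃).trans_eq ?_
  rw [mul_pow, mul_pow, mul_pow, rpow_neg_quarter_sq (by positivity), Real.sq_sqrt (by positivity),
    Real.sq_sqrt (by positivity), Real.sq_sqrt (by positivity)]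
  ring

lemma expect_norm_expect_mul_left_right_sub_le (hQR : IsQuasiRandomFin G D) (hD : 0 < D)
    {u : G → ℂ} (hu : ∀ x, ‖u x‖ ≤ 1) (v : G → ℂ) :
    𝔼 g, ‖𝔼 x, u (g * x) * v (x * g) - 𝔼 x, classAvg u x * classAvg v x‖
      ≤ √(𝔼 x, ‖v x‖ ^ 2) * (D : ℝ) ^ (-(1 / 4) : ℝ) := by
  have sqrt_le : √(D : ℝ) ≤ D := Real.sqrt_le_self_iff.2 <| .inr <| by exact_mod_cast hD
  refine (expect_le_sqrt_expect_sq _).trans (Real.sqrt_le_iff.2 ⟨by positivity, ?_⟩)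
  rw [mul_pow, rpow_neg_quarter_sq (by positivity), Real.sq_sqrt (by positivity), ← div_eq_mul_inv]
  calc 𝔼 g, ‖𝔼 x, u (g * x) * v (x * g) - 𝔼 x, classAvg u x * classAvg v x‖ ^ 2
      ≤ (𝔼 x, ‖u x‖ ^ 2) * (𝔼 x, ‖v x‖ ^ 2) / D :=
        hQR.expect_norm_expect_mul_left_right_sub_sq_le hD u v
    _ ≤ 1 * (𝔼 x, ‖v x‖ ^ 2) / √D := by
        gcongr
        exact expect_norm_sq_le_one hu
    _ = (𝔼 x, ‖v x‖ ^ 2) / √D := by rw [one_mul]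

end Mixing

end IsQuasiRandomFin

theorem quantitative_equidistribution_quadruples_finite_general
    {G : Type*} [Group G] [Fintype G]
    (D : ℕ) (hD : 0 < D) (hQR : IsQuasiRandomFin G D)
    (f₁ f₂ f₃ : G → ℂ) (hb₂ : ∀ x, ‖f₂ x‖ ≤ 1) :
    𝔼 g, ‖𝔼 x, f₁ x * f₂ (g * x) * f₃ (x * g)
        - (𝔼 x, f₁ x) * 𝔼 x, classAvg f₂ x * classAvg f₃ x‖
      ≤ (1 + √2) * √(𝔼 x, ‖f₁ x‖ ^ 2) * √(𝔼 x, ‖f₃ x‖ ^ 2) * (D : ℝ) ^ (-(1 / 4) : ℝ) := by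
  set m := 𝔼 x, f₁ x with hm
  set K := 𝔼 x, classAvg f₂ x * classAvg f₃ x
  set δ := (D : ℝ) ^ (-(1 / 4) : ℝ)
  have mean_zero : 𝔼 x, (f₁ x - m) = 0 := by
    rw [Finset.expect_sub_distrib, Fintype.expect_const, hm, sub_self]
  have split (g : G) : 𝔼 x, f₁ x * f₂ (g * x) * f₃ (x * g) - m * K
      = 𝔼 x, (f₁ x - m) * f₂ (g * x) * f₃ (x * g) + m * (𝔼 x, f₂ (g * x) * f₃ (x * g) - K) := by
    simp only [sub_mul, Finset.expect_sub_distrib, mul_assoc, ← Finset.mul_expect]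
    ring
  have variance_le : 𝔼 x, ‖f₁ x - m‖ ^ 2 ≤ 𝔼 x, ‖f₁ x‖ ^ 2 := by
    simpa using expect_norm_sub_expect_sq_le f₁ 0
  have norm_mean_le : ‖m‖ ≤ √(𝔼 x, ‖f₁ x‖ ^ 2) := Real.le_sqrt_of_sq_le (norm_expect_sq_le f₁)
  calc 𝔼 g, ‖𝔼 x, f₁ x * f₂ (g * x) * f₃ (x * g) - m * K‖
      ≤ 𝔼 g, (‖𝔼 x, (f₁ x - m) * f₂ (g * x) * f₃ (x * g)‖
          + ‖m‖ * ‖𝔼 x, f₂ (g * x) * f₃ (x * g) - K‖) := by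
        refine Finset.expect_le_expect fun g _ => ?_
        rw [split, ← norm_mul]
        exact norm_add_le _ _
    _ = 𝔼 g, ‖𝔼 x, (f₁ x - m) * f₂ (g * x) * f₃ (x * g)‖
          + ‖m‖ * 𝔼 g, ‖𝔼 x, f₂ (g * x) * f₃ (x * g) - K‖ := by
        rw [Finset.expect_add_distrib, ← Finset.mul_expect]
    _ ≤ √2 * √(𝔼 x, ‖f₁ x - m‖ ^ 2) * √(𝔼 x, ‖f₃ x‖ ^ 2) * δ
          + ‖m‖ * (√(𝔼 x, ‖f₃ x‖ ^ 2) * δ) := by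
        gcongr
        · exact hQR.expect_norm_triple_correlation_le hD mean_zero hb₂ f₃
        · exact hQR.expect_norm_expect_mul_left_right_sub_le hD hb₂ f₃
    _ ≤ √2 * √(𝔼 x, ‖f₁ x‖ ^ 2) * √(𝔼 x, ‖f₃ x‖ ^ 2) * δ
          + √(𝔼 x, ‖f₁ x‖ ^ 2) * (√(𝔼 x, ‖f₃ x‖ ^ 2) * δ) := by gcongr
    _ = (1 + √2) * √(𝔼 x, ‖f₁ x‖ ^ 2) * √(𝔼 x, ‖f₃ x‖ ^ 2) * δ := by ring

/-- **Quantitative equidistribution of quadruples in finite quasi-random groups.**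
If `G` is a finite group all of whose nontrivial complex irreducible representations have
dimension at least `D`, then for all `f₁, f₂, f₃ : G → 𝔻`,
`(1/|G|) Σ_g |(1/|G|) Σ_x f₁(x) f₂(gx) f₃(xg) − ((1/|G|) Σ_x f₁(x))·((1/|G|) Σ_x Ef₂(x)·Ef₃(x))|
  ≤ 4·D^{-1/8}`, where `Ef` denotes the average of `f` over conjugacy classes. -/
theorem quantitative_equidistribution_quadruples_finite
    {G : Type*} [Group G] [Fintype G]
    (D : ℕ) (hD : 0 < D) (hQR : IsQuasiRandomFin G D)
    (f₁ f₂ f₃ : G → ℂ)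
    (hb₁ : ∀ x, ‖f₁ x‖ ≤ 1) (hb₂ : ∀ x, ‖f₂ x‖ ≤ 1) (hb₃ : ∀ x, ‖f₃ x‖ ≤ 1) :
    (Fintype.card G : ℝ)⁻¹ * ∑ g : G,
      ‖(Fintype.card G : ℂ)⁻¹ * ∑ x : G, f₁ x * f₂ (g * x) * f₃ (x * g)
        - ((Fintype.card G : ℂ)⁻¹ * ∑ x : G, f₁ x) *
          ((Fintype.card G : ℂ)⁻¹ * ∑ x : G, classAvg f₂ x * classAvg f₃ x)‖
      ≤ 4 * (D : ℝ) ^ (-(1 / 8 : ℝ)) := by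
  have sqrt_two_le : √2 ≤ 3 := Real.sqrt_le_left (by norm_num) |>.2 (by norm_num)
  have one_le_D : (1 : ℝ) ≤ D := by exact_mod_cast hD
  simp only [inv_mul_eq_div, ← Fintype.expect_eq_sum_div_card]
  calc _ ≤ (1 + √2) * √(𝔼 x, ‖f₁ x‖ ^ 2) * √(𝔼 x, ‖f₃ x‖ ^ 2) * (D : ℝ) ^ (-(1 / 4) : ℝ) :=
        quantitative_equidistribution_quadruples_finite_general D hD hQR f₁ f₂ f₃ hb₂
    _ ≤ (1 + 3) * 1 * 1 * (D : ℝ) ^ (-(1 / 8) : ℝ) := by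
        gcongr
        · exact Real.sqrt_le_one.2 (expect_norm_sq_le_one hb₁)
        · exact Real.sqrt_le_one.2 (expect_norm_sq_le_one hb₃)
        · norm_num
    _ = 4 * (D : ℝ) ^ (-(1 / 8) : ℝ) := by ring
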